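/- For every n ≥ 1, the equivalence relation =_ℕ^{n+} is compact for learning: a countable family K of pairwise nonisomorphic structures in Mod is =_ℕ^{n+}-learnable if and only if for all distinct A, B ∈ K the pair {A, B} is =_ℕ^{n+}-learnable. -/

import Mathlib

/-!  Common definitions.

`Tower n` is the space ℕ^(ℕ^(n+1)) of the paper: `Tower 0 = ℕ → ℕ`,
`Tower (n+1) = ℕ → Tower n`, each with the product topology (ℕ discrete).
-/

def Tower : ℕ → Type
  | 0 => ℕ → ℕ
  | n + 1 => ℕ → Tower n

instance Tower.topologicalSpace : (n : ℕ) → TopologicalSpace (Tower n)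
  | 0 => inferInstanceAs (TopologicalSpace (ℕ → ℕ))
  | n + 1 => letI := Tower.topologicalSpace n
             inferInstanceAs (TopologicalSpace (ℕ → Tower n))

/-- The Friedman–Stanley jump `E⁺` of an equivalence relation `E` on `X`. -/
def FSJump {X : Type*} (E : X → X → Prop) (p q : ℕ → X) : Prop :=
  (∀ k, ∃ l, E (p k) (q l)) ∧ ∀ l, ∃ k, E (q l) (p k)

/-- The power `E^ω` of an equivalence relation `E` on `X`. -/
def RelPow {X : Type*} (E : X → X → Prop) (p q : ℕ → X) : Prop :=
  ∀ k, E (p k) (q k)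

/-- `eqNatPlus n` is the relation `=_ℕ^{(n+1)+}` on `Tower n = ℕ^(ℕ^(n+1))`. -/
def eqNatPlus : (n : ℕ) → Tower n → Tower n → Prop
  | 0 => FSJump (· = · : ℕ → ℕ → Prop)
  | n + 1 => FSJump (eqNatPlus n)

/-- `eqBairePlus n` is the relation `=_{ℕ^ℕ}^{(n+1)+}` on `Tower (n+1) = ℕ^(ℕ^(n+2))`. -/
def eqBairePlus : (n : ℕ) → Tower (n + 1) → Tower (n + 1) → Prop
  | 0 => FSJump (· = · : (ℕ → ℕ) → (ℕ → ℕ) → Prop)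
  | n + 1 => FSJump (eqBairePlus n)

/-- `FullRel m` on `Tower m = ℕ^(ℕ^(m+1))`: for `m = 2n` it is `(=_ℕ^+)^{n(ω+)}`,
for `m = 2n+1` it is `(=_{ℕ^ℕ}^+)^{n(ω+)}` (with `E^{0(ω+)} = E`,
`E^{(n+1)(ω+)} = ((E^{n(ω+)})^ω)^+`). -/
def FullRel : (m : ℕ) → Tower m → Tower m → Prop
  | 0 => FSJump (· = · : ℕ → ℕ → Prop)
  | 1 => FSJump (· = · : (ℕ → ℕ) → (ℕ → ℕ) → Prop)
  | m + 2 => FSJump (RelPow (FullRel m))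

/-- The pair of canonical elements `(F_{m+1}, I_{m+1})` of `Tower m = ℕ^(ℕ^(m+1))`. -/
def can : (m : ℕ) → Tower m × Tower m
  | 0 => (fun k => if k = 0 then 0 else 1, fun _ => 1)
  | 1 => (fun i k => if i = 0 then 0 else if k + 1 < i then 0 else 1,
          fun i k => if k < i then 0 else 1)
  | m + 2 =>
      (fun i k => if i = 0 then (can m).1 else if k + 1 < i then (can m).1 else (can m).2,
       fun i k => if k < i then (can m).1 else (can m).2)

/-- The canonical element `F_{m+1} ∈ ℕ^(ℕ^(m+1))`. -/
def canF (m : ℕ) : Tower m := (can m).1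

/-- The canonical element `I_{m+1} ∈ ℕ^(ℕ^(m+1))`. -/
def canI (m : ℕ) : Tower m := (can m).2

/-- `p ∈ Tower m = ℕ^(ℕ^(m+1))` is `full_{m+1}`. -/
def IsFull (m : ℕ) (p : Tower m) : Prop := FullRel m p (canF m)

/-- `p ∈ Tower m = ℕ^(ℕ^(m+1))` is `initial_{m+1}`. -/
def IsInitial (m : ℕ) (p : Tower m) : Prop := FullRel m p (canI m)

open Classical in
/-- The permission operator `∧₀`. -/
noncomputable def perm0 (p q : ℕ → ℕ) : ℕ → ℕ :=
  fun k => if ∀ j ≤ k, p j = q j then p k else 1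

/-- The permission operator `∧_{m+1}` on `Tower m = ℕ^(ℕ^(m+1))`
(with `⟨·,·⟩ = Nat.pair`). -/
noncomputable def perm : (m : ℕ) → Tower m → Tower m → Tower m
  | 0, p, q => fun x => max (p (Nat.unpair x).1) (q (Nat.unpair x).2)
  | 1, p, q => fun x => perm0 (p (Nat.unpair x).1) (q (Nat.unpair x).2)
  | m + 2, p, q => fun x k => perm m (p (Nat.unpair x).1 k) (q (Nat.unpair x).2 k)

/-- The operator `⊗_{m+1,i}` on `Tower m = ℕ^(ℕ^(m+1))` (with `⟨·,·⟩ = Nat.pair`). -/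
def otimes : (m : ℕ) → ℕ → Tower m → Tower m
  | 0, i, p => fun k => Nat.pair (p k) i
  | m + 1, i, p => fun k => otimes m i (p k)

/-- `E` continuously reduces to `F`. -/
def ContReduces {X Y : Type*} [TopologicalSpace X] [TopologicalSpace Y]
    (E : X → X → Prop) (F : Y → Y → Prop) : Prop :=
  ∃ f : X → Y, Continuous f ∧ ∀ x x', E x x' ↔ F (f x) (f x')

/-- `SigmaLevel X n` is the pointclass `Σ⁰_{n+1}(X)`: `Σ⁰_1` = open sets,
`Σ⁰_{n+1}` = countable unions of complements of `Σ⁰_n` sets. -/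
def SigmaLevel (X : Type*) [TopologicalSpace X] : ℕ → Set (Set X)
  | 0 => {C | IsOpen C}
  | n + 1 => {C | ∃ A : ℕ → Set X, (∀ i, A i ∈ SigmaLevel X n) ∧ C = ⋃ i, (A i)ᶜ}

/-- The space of `(ι, ar)`-structures with domain ℕ. -/
def Md (ι : Type) (ar : ι → ℕ) : Type := ∀ i : ι, (Fin (ar i) → ℕ) → Bool

instance (ι : Type) (ar : ι → ℕ) : TopologicalSpace (Md ι ar) :=
  inferInstanceAs (TopologicalSpace (∀ i : ι, (Fin (ar i) → ℕ) → Bool))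

/-- Isomorphism of structures with domain ℕ. -/
def Iso {ι : Type} {ar : ι → ℕ} (A B : Md ι ar) : Prop :=
  ∃ σ : ℕ → ℕ, Function.Bijective σ ∧ ∀ i v, A i v = B i (σ ∘ v)

/-- The learning domain of a family: the closure of `K` under isomorphism. -/
def LearnDom {ι : Type} {ar : ι → ℕ} (K : Set (Md ι ar)) : Set (Md ι ar) :=
  {S | ∃ A ∈ K, Iso S A}

/-- The family `K` is `E`-learnable. -/
def Learnable {ι : Type} {ar : ι → ℕ} {X : Type*} [TopologicalSpace X]
    (E : X → X → Prop) (K : Set (Md ι ar)) : Prop :=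
  ∃ Γ : LearnDom K → X, Continuous Γ ∧
    ∀ S S' : LearnDom K, (Iso S.1 S'.1 ↔ E (Γ S) (Γ S'))

/-- A countable family of pairwise nonisomorphic structures. -/
def GoodFamily {ι : Type} {ar : ι → ℕ} (K : Set (Md ι ar)) : Prop :=
  K.Countable ∧ ∀ A ∈ K, ∀ B ∈ K, A ≠ B → ¬ Iso A B

/-- `E` is learn-reducible to `F` (w.r.t. structures in `Md ι ar`). -/
def LearnRed (ι : Type) (ar : ι → ℕ) {X Y : Type*} [TopologicalSpace X]
    [TopologicalSpace Y] (E : X → X → Prop) (F : Y → Y → Prop) : Prop :=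
  ∀ K : Set (Md ι ar), GoodFamily K → Learnable E K → Learnable F K

/-- `E` is compact for learning (w.r.t. structures in `Md ι ar`). -/
def CompactForLearning (ι : Type) (ar : ι → ℕ) {X : Type*} [TopologicalSpace X]
    (E : X → X → Prop) : Prop :=
  ∀ K : Set (Md ι ar), GoodFamily K →
    (Learnable E K ↔ ∀ A ∈ K, ∀ B ∈ K, A ≠ B → Learnable E ({A, B} : Set (Md ι ar)))

/-!
The argument works for a continuous action of a Baire second countable group `G` on a
zero-dimensional second countable space `X`; structures are the case of `Equiv.Perm ℕ` acting on
`Md ι ar`.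

Inequivalent points of `=_ℕ^{(n+1)+}` are separated by an invariant `Σ⁰_{2n+1}` set. Pulling such a
set back along a reduction that learns `{a, b}`, extending it to `X` and applying the Vaught
transform yields a `G`-invariant `Σ⁰_{2n+1}` set that separates the orbits of `a` and `b`.
Conversely, each `Σ⁰_{2n+1}` set is coded by a continuous map into `Tower n` taking only two
classes, and countably many such maps can be merged into one, because the jump absorbs countable
powers; a point is determined up to its orbit by which of the separating sets, one for each pair
from `K`, contain it.
-/

open Set TopologicalSpace

/-! ### Finite Borel classes -/

namespace SigmaLevel

variable {X Y I : Type*} [TopologicalSpace X] [TopologicalSpace Y] {n : ℕ}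

theorem empty_mem_and_univ_mem (n : ℕ) : ∅ ∈ SigmaLevel X n ∧ univ ∈ SigmaLevel X n := by
  induction n with
  | zero => exact ⟨isOpen_empty, isOpen_univ⟩
  | succ n ih =>
    exact ⟨⟨fun _ => univ, fun _ => ih.2, by simp⟩,
      ⟨fun _ => ∅, fun _ => ih.1, by simp [iUnion_const]⟩⟩

theorem iUnion_compl_mem [Countable I] {A : I → Set X} (hA : ∀ i, A i ∈ SigmaLevel X n) :
    ⋃ i, (A i)ᶜ ∈ SigmaLevel X (n + 1) := by
  cases isEmpty_or_nonempty I
  · simpa using (empty_mem_and_univ_mem (X := X) (n + 1)).1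
  · obtain ⟨f, hf⟩ := exists_surjective_nat I
    exact ⟨fun k => A (f k), fun k => hA _, (hf.iUnion_comp fun i => (A i)ᶜ).symm⟩

theorem compl_mem {A : Set X} (hA : A ∈ SigmaLevel X n) : Aᶜ ∈ SigmaLevel X (n + 1) :=
  ⟨fun _ => A, fun _ => hA, (iUnion_const _).symm⟩

theorem iUnion_mem [Countable I] {A : I → Set X} (hA : ∀ i, A i ∈ SigmaLevel X n) :
    ⋃ i, A i ∈ SigmaLevel X n := by
  cases n with
  | zero => exact isOpen_iUnion hA
  | succ n =>
    choose B hB hAB using hA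
    have hUnion : ⋃ i, A i = ⋃ p : I × ℕ, (B p.1 p.2)ᶜ := by
      rw [iUnion_prod']
      exact iUnion_congr hAB
    exact hUnion ▸ iUnion_compl_mem fun p => hB _ _

theorem iInter_mem [Countable I] {A : I → Set X} (hA : ∀ i, A i ∈ SigmaLevel X n) :
    ⋂ i, A i ∈ SigmaLevel X (n + 2) := by
  rw [iInter_eq_compl_iUnion_compl]
  exact compl_mem (iUnion_compl_mem hA)

theorem union_mem {A B : Set X} (hA : A ∈ SigmaLevel X n) (hB : B ∈ SigmaLevel X n) :
    A ∪ B ∈ SigmaLevel X n := by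
  rw [union_eq_iUnion]
  exact iUnion_mem (Bool.forall_bool.2 ⟨hB, hA⟩)

theorem inter_mem {A B : Set X} (hA : A ∈ SigmaLevel X n) (hB : B ∈ SigmaLevel X n) :
    A ∩ B ∈ SigmaLevel X n := by
  cases n with
  | zero => exact IsOpen.inter hA hB
  | succ n =>
    obtain ⟨C, hC, rfl⟩ := hA
    obtain ⟨D, hD, rfl⟩ := hB
    have hInter : (⋃ i, (C i)ᶜ) ∩ (⋃ i, (D i)ᶜ) = ⋃ p : ℕ × ℕ, (C p.1 ∪ D p.2)ᶜ := by
      ext x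
      simp
    exact hInter ▸ iUnion_compl_mem fun p => union_mem (hC _) (hD _)

theorem biInter_mem {s : Set I} (hs : s.Finite) {A : I → Set X}
    (hA : ∀ i ∈ s, A i ∈ SigmaLevel X n) : ⋂ i ∈ s, A i ∈ SigmaLevel X n := by
  induction s, hs using Set.Finite.induction_on with
  | empty => simpa using (empty_mem_and_univ_mem (X := X) n).2
  | insert _ _ ih =>
    rw [biInter_insert]
    exact inter_mem (hA _ (mem_insert _ _)) (ih fun i hi => hA i (mem_insert_of_mem _ hi))

theorem preimage_mem {f : X → Y} (hf : Continuous f) {A : Set Y} (hA : A ∈ SigmaLevel Y n) :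
    f ⁻¹' A ∈ SigmaLevel X n := by
  induction n generalizing A with
  | zero => exact IsOpen.preimage hf hA
  | succ n ih =>
    obtain ⟨C, hC, rfl⟩ := hA
    rw [preimage_iUnion]
    exact ⟨fun i => f ⁻¹' C i, fun i => ih (hC i), rfl⟩

theorem exists_preimage_eq_of_isInducing {f : X → Y} (hf : Topology.IsInducing f) {A : Set X}
    (hA : A ∈ SigmaLevel X n) : ∃ B ∈ SigmaLevel Y n, f ⁻¹' B = A := by
  induction n generalizing A with
  | zero => exact hf.isOpen_iff.1 hA
  | succ n ih =>
    obtain ⟨C, hC, rfl⟩ := hA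
    choose B hB hBC using fun i => ih (hC i)
    refine ⟨⋃ i, (B i)ᶜ, iUnion_compl_mem hB, ?_⟩
    simp only [preimage_iUnion, preimage_compl, hBC]

theorem measurableSet [MeasurableSpace X] [OpensMeasurableSpace X] {A : Set X}
    (hA : A ∈ SigmaLevel X n) : MeasurableSet A := by
  induction n generalizing A with
  | zero => exact IsOpen.measurableSet hA
  | succ n ih =>
    obtain ⟨C, hC, rfl⟩ := hA
    exact MeasurableSet.iUnion fun i => (ih (hC i)).compl

end SigmaLevel

/-! ### Vaught transforms -/

theorem exists_mem_countableBasis_isMeagre_sdiff {X : Type*} [TopologicalSpace X]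
    [SecondCountableTopology X] {A O : Set X} (hA : BaireMeasurableSet A) (hO : IsOpen O)
    (hAO : A ⊆ O) (hne : ¬ IsMeagre A) : ∃ b ∈ countableBasis X, b ⊆ O ∧ IsMeagre (b \ A) := by
  obtain ⟨u, hu, hAu⟩ := hA.residualEq_isOpen
  have hA_diff : IsMeagre (A \ u) := by
    filter_upwards [hAu.mem_iff] with x hx using fun h => h.2 (hx.1 h.1)
  have hu_diff : IsMeagre (u \ A) := by
    filter_upwards [hAu.mem_iff] with x hx using fun h => h.2 (hx.2 h.1)
  obtain ⟨x, hxA, hxu⟩ : (A ∩ u).Nonempty := by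
    refine nonempty_of_not_isMeagre fun h => hne ?_
    exact inter_union_sdiff A u ▸ h.union hA_diff
  obtain ⟨b, hb, -, hbu⟩ := (isBasis_countableBasis X).exists_subset_of_mem_open
    (⟨hxu, hAO hxA⟩ : x ∈ u ∩ O) (hu.inter hO)
  exact ⟨b, hb, hbu.trans inter_subset_right,
    hu_diff.mono (sdiff_subset_sdiff_left (hbu.trans inter_subset_left))⟩

section Vaught

variable {G X : Type*} [TopologicalSpace G]

/-- The Vaught transform `V^{Δ O}`: the points `x` such that `g • x ∈ V` for non-meagrely many
`g ∈ O`. It makes a set invariant without raising its Borel class. -/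
def vaughtTransform [SMul G X] (V : Set X) (O : Set G) : Set X :=
  {x | ¬ IsMeagre (O ∩ (· • x) ⁻¹' V)}

theorem smul_mem_vaughtTransform_univ [Group G] [ContinuousMul G] [MulAction G X] (V : Set X)
    (g : G) (x : X) :
    g • x ∈ vaughtTransform V (univ : Set G) ↔ x ∈ vaughtTransform V (univ : Set G) := by
  have hpre : ((· • g • x) ⁻¹' V : Set G) = Homeomorph.mulRight g ⁻¹' ((· • x) ⁻¹' V) := by
    ext h
    simp [mul_smul]
  simp only [vaughtTransform, mem_ofPred_eq, univ_inter]
  rw [hpre, IsMeagre, IsMeagre, ← preimage_compl, ← Filter.mem_map, Homeomorph.residual_map_eq]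

variable [BaireSpace G]

theorem mem_vaughtTransform_univ_iff [Nonempty G] [SMul G X] {V : Set X} {x : X} {p : Prop}
    (h : ∀ g : G, g • x ∈ V ↔ p) : x ∈ vaughtTransform V (univ : Set G) ↔ p := by
  have hpre : ((· • x) ⁻¹' V : Set G) = {_g | p} := Set.ext h
  by_cases hp : p <;>
    simp [vaughtTransform, hpre, hp, IsMeagre.empty, not_isMeagre_of_isOpen isOpen_univ]

variable [Group G] [TopologicalSpace X] [MulAction G X] [ContinuousSMul G X]

theorem isOpen_vaughtTransform {V : Set X} {O : Set G} (hV : IsOpen V) (hO : IsOpen O) :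
    IsOpen (vaughtTransform V O) := by
  have hUnion : vaughtTransform V O = ⋃ g ∈ O, (g • ·) ⁻¹' V := by
    ext x
    simp only [vaughtTransform, mem_ofPred_eq, mem_iUnion, mem_preimage, exists_prop]
    constructor
    · exact nonempty_of_not_isMeagre
    · exact not_isMeagre_of_isOpen
        (hO.inter (hV.preimage (continuous_id.smul continuous_const)))
  rw [hUnion]
  exact isOpen_biUnion fun g _ => hV.preimage (continuous_const_smul g)

variable [SecondCountableTopology G]

theorem vaughtTransform_iUnion_compl {I : Type*} [Countable I] [MeasurableSpace X] [BorelSpace X]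
    {C : I → Set X} (hC : ∀ i, MeasurableSet (C i)) {O : Set G} (hO : IsOpen O) :
    vaughtTransform (⋃ i, (C i)ᶜ) O =
      ⋃ p : I × {b // b ∈ countableBasis G ∧ b ⊆ O}, (vaughtTransform (C p.1) p.2.1)ᶜ := by
  ext x
  simp only [vaughtTransform, mem_iUnion, mem_compl_iff, mem_ofPred_eq, not_not]
  constructor
  · intro h
    rw [preimage_iUnion, inter_iUnion] at h
    obtain ⟨i, hi⟩ : ∃ i, ¬ IsMeagre (O ∩ (· • x) ⁻¹' (C i)ᶜ) := by
      by_contra! hmeagre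
      exact h (isMeagre_iUnion hmeagre)
    have hBaire : BaireMeasurableSet (O ∩ (· • x) ⁻¹' (C i)ᶜ) := by
      borelize G
      have hcont : Continuous fun g : G => g • x := continuous_id.smul continuous_const
      exact hO.baireMeasurableSet.inter (hcont.measurable (hC i).compl).baireMeasurableSet
    obtain ⟨b, hb, hbO, hmeagre⟩ :=
      exists_mem_countableBasis_isMeagre_sdiff hBaire hO inter_subset_left hi
    exact ⟨(i, ⟨b, hb, hbO⟩), hmeagre.mono fun g hg => mem_sdiff_of_mem hg.1 fun h => h.2 hg.2⟩
  · rintro ⟨⟨i, b, hb, hbO⟩, hmeagre⟩ h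
    refine not_isMeagre_of_isOpen (isOpen_of_mem_countableBasis hb)
      (nonempty_of_mem_countableBasis hb) ((hmeagre.union h).mono fun g hg => ?_)
    by_cases hgi : g • x ∈ C i
    · exact Or.inl ⟨hg, hgi⟩
    · exact Or.inr ⟨hbO hg, mem_iUnion.2 ⟨i, hgi⟩⟩

theorem SigmaLevel.vaughtTransform_mem {n : ℕ} {V : Set X} (hV : V ∈ SigmaLevel X n) {O : Set G}
    (hO : IsOpen O) : vaughtTransform V O ∈ SigmaLevel X n := by
  induction n generalizing V O with
  | zero => exact isOpen_vaughtTransform hV hO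
  | succ n ih =>
    obtain ⟨C, hC, rfl⟩ := hV
    borelize X
    have : Countable {b // b ∈ countableBasis G ∧ b ⊆ O} :=
      ((countable_countableBasis G).mono fun _ hb => hb.1).to_subtype
    rw [vaughtTransform_iUnion_compl (fun i => SigmaLevel.measurableSet (hC i)) hO]
    exact iUnion_compl_mem fun p => ih (hC _) (isOpen_of_mem_countableBasis p.2.2.1)

theorem SigmaLevel.exists_invariant_extension [ContinuousMul G] {n : ℕ} {D : Set X}
    (hD : ∀ (g : G), ∀ x ∈ D, g • x ∈ D) {A : Set D} (hA : A ∈ SigmaLevel D n)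
    (hinv : ∀ x y : D, x.1 ∈ MulAction.orbit G y.1 → (x ∈ A ↔ y ∈ A)) :
    ∃ U ∈ SigmaLevel X n, (∀ (g : G) x, g • x ∈ U ↔ x ∈ U) ∧ Subtype.val ⁻¹' U = A := by
  obtain ⟨V, hV, rfl⟩ := exists_preimage_eq_of_isInducing Topology.IsInducing.subtypeVal hA
  refine ⟨vaughtTransform V (univ : Set G), vaughtTransform_mem hV isOpen_univ,
    smul_mem_vaughtTransform_univ V, Set.ext fun x => mem_vaughtTransform_univ_iff fun g => ?_⟩
  exact hinv ⟨g • x.1, hD g x x.2⟩ x (MulAction.mem_orbit _ g)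

end Vaught

/-! ### The relations `=_ℕ^{(n+1)+}` and their complexity -/

section Jump

variable {X : Type*} {E : X → X → Prop}

theorem FSJump.equivalence (hE : Equivalence E) : Equivalence (FSJump E) where
  refl p := ⟨fun k => ⟨k, hE.refl _⟩, fun k => ⟨k, hE.refl _⟩⟩
  symm h := ⟨h.2, h.1⟩
  trans := by
    rintro p q r ⟨hpq, hqp⟩ ⟨hqr, hrq⟩
    constructor
    · intro k
      obtain ⟨l, hl⟩ := hpq k
      exact (hqr l).imp fun _ => hE.trans hl
    · intro k
      obtain ⟨l, hl⟩ := hrq k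
      exact (hqp l).imp fun _ => hE.trans hl

theorem RelPow.equivalence (hE : Equivalence E) : Equivalence (RelPow E) where
  refl _ _ := hE.refl _
  symm h k := hE.symm (h k)
  trans hpq hqr k := hE.trans (hpq k) (hqr k)

theorem fsJump_iff_forall_exists_iff (hE : Equivalence E) {p q : ℕ → X} :
    FSJump E p q ↔ ∀ c, (∃ k, E (p k) c) ↔ ∃ k, E (q k) c := by
  constructor
  · rintro ⟨hpq, hqp⟩ c
    constructor
    · rintro ⟨k, hk⟩
      exact (hpq k).imp fun _ hl => hE.trans (hE.symm hl) hk
    · rintro ⟨k, hk⟩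
      exact (hqp k).imp fun _ hl => hE.trans (hE.symm hl) hk
  · intro h
    exact ⟨fun k => ((h _).1 ⟨k, hE.refl _⟩).imp fun _ => hE.symm,
      fun k => ((h _).2 ⟨k, hE.refl _⟩).imp fun _ => hE.symm⟩

variable [TopologicalSpace X] {m : ℕ}

theorem exists_rel_mem_sigmaLevel {c : X} (hc : {x | E x c} ∈ SigmaLevel X m) :
    {p : ℕ → X | ∃ k, E (p k) c} ∈ SigmaLevel (ℕ → X) m := by
  rw [ofPred_exists]
  exact SigmaLevel.iUnion_mem fun k =>
    SigmaLevel.preimage_mem (f := fun p : ℕ → X => p k) (continuous_apply k) hc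

theorem FSJump.class_mem_sigmaLevel (hE : Equivalence E)
    (hclass : ∀ c, {x | E x c} ∈ SigmaLevel X m) (q : ℕ → X) :
    {p | FSJump E p q} ∈ SigmaLevel (ℕ → X) (m + 2) := by
  have heq : {p | FSJump E p q} =
      (⋂ k, (fun p : ℕ → X => p k) ⁻¹' ⋃ l, {x | E x (q l)}) ∩
        ⋂ l, {p : ℕ → X | ∃ k, E (p k) (q l)} := by
    ext p
    simp only [FSJump, mem_ofPred_eq, mem_inter_iff, mem_iInter, mem_preimage, mem_iUnion]
    exact and_congr_right' (forall_congr' fun l => exists_congr fun k => ⟨hE.symm, hE.symm⟩)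
  rw [heq]
  exact SigmaLevel.inter_mem
    (SigmaLevel.iInter_mem fun k => SigmaLevel.preimage_mem (continuous_apply k)
      (SigmaLevel.iUnion_mem fun l => hclass (q l)))
    (SigmaLevel.iInter_mem fun l => exists_rel_mem_sigmaLevel (hclass (q l)))

theorem FSJump.exists_separating (hE : Equivalence E)
    (hclass : ∀ c, {x | E x c} ∈ SigmaLevel X m) {p q : ℕ → X} (hpq : ¬ FSJump E p q) :
    ∃ W ∈ SigmaLevel (ℕ → X) m,
      (∀ r s, FSJump E r s → (r ∈ W ↔ s ∈ W)) ∧ ¬ (p ∈ W ↔ q ∈ W) := by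
  rw [fsJump_iff_forall_exists_iff hE, not_forall] at hpq
  obtain ⟨c, hc⟩ := hpq
  exact ⟨_, exists_rel_mem_sigmaLevel (hclass c),
    fun r s hrs => (fsJump_iff_forall_exists_iff hE).1 hrs c, hc⟩

end Jump

theorem eqNatPlus_equivalence (n : ℕ) : Equivalence (eqNatPlus n) := by
  induction n with
  | zero => exact FSJump.equivalence eq_equivalence
  | succ n ih => exact FSJump.equivalence ih

theorem eqNatPlus_class_mem_sigmaLevel (n : ℕ) (y : Tower n) :
    {x | eqNatPlus n x y} ∈ SigmaLevel (Tower n) (2 * n + 2) := by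
  induction n with
  | zero => exact FSJump.class_mem_sigmaLevel (m := 0) eq_equivalence (fun _ => isOpen_discrete _) y
  | succ n ih => exact FSJump.class_mem_sigmaLevel (eqNatPlus_equivalence n) ih y

theorem exists_separating_of_not_eqNatPlus {n : ℕ} {p q : Tower n} (hpq : ¬ eqNatPlus n p q) :
    ∃ W ∈ SigmaLevel (Tower n) (2 * n),
      (∀ r s, eqNatPlus n r s → (r ∈ W ↔ s ∈ W)) ∧ ¬ (p ∈ W ↔ q ∈ W) := by
  cases n with
  | zero =>
    exact FSJump.exists_separating (m := 0) eq_equivalence (fun _ => isOpen_discrete _) hpq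
  | succ n =>
    exact FSJump.exists_separating (eqNatPlus_equivalence n) (eqNatPlus_class_mem_sigmaLevel n) hpq

/-! ### Continuous reductions and the absorption of countable powers -/

namespace ContReduces

variable {X Y Z : Type*} [TopologicalSpace X] [TopologicalSpace Y] [TopologicalSpace Z]
  {E : X → X → Prop} {F : Y → Y → Prop} {D : Z → Z → Prop}

theorem refl (E : X → X → Prop) : ContReduces E E :=
  ⟨id, continuous_id, fun _ _ => Iff.rfl⟩

theorem trans (hEF : ContReduces E F) (hFD : ContReduces F D) : ContReduces E D := by
  obtain ⟨f, hf, hEF⟩ := hEF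
  obtain ⟨g, hg, hFD⟩ := hFD
  exact ⟨g ∘ f, hg.comp hf, fun x y => (hEF x y).trans (hFD _ _)⟩

theorem relPow (h : ContReduces E F) : ContReduces (RelPow E) (RelPow F) := by
  obtain ⟨f, hf, hEF⟩ := h
  exact ⟨fun p k => f (p k), by fun_prop, fun p q => forall_congr' fun k => hEF _ _⟩

theorem fsJump (h : ContReduces E F) : ContReduces (FSJump E) (FSJump F) := by
  obtain ⟨f, hf, hEF⟩ := h
  refine ⟨fun p k => f (p k), by fun_prop, fun p q => ?_⟩
  simp only [FSJump, hEF]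

theorem forall_relPow {E : ℕ → X → X → Prop} (h : ∀ k, ContReduces (E k) F) :
    ContReduces (fun x y => ∀ k, E k x y) (RelPow F) := by
  choose f hf hEF using h
  exact ⟨fun x k => f k x, by fun_prop, fun x y => forall_congr' fun k => hEF k x y⟩

end ContReduces

/-- `T` splits the classes of `E` into countably many disjoint copies: the family `T` is used to
encode in a single point of `X` which term of a sequence it comes from. -/
structure IsTagging {X : Type*} [TopologicalSpace X] (E : X → X → Prop) (T : ℕ → X → X) : Prop where
  continuous : ∀ i, Continuous (T i)
  rel_iff : ∀ i j x y, E (T i x) (T j y) ↔ i = j ∧ E x y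

namespace IsTagging

variable {X : Type*} [TopologicalSpace X] {E : X → X → Prop} {T : ℕ → X → X}

theorem fsJump (hT : IsTagging E T) : IsTagging (FSJump E) fun i p k => T i (p k) where
  continuous i := continuous_pi fun k => (hT.continuous i).comp (continuous_apply k)
  rel_iff i j p q := by
    simp only [FSJump, hT.rel_iff, exists_and_left, forall_and, forall_const]
    rw [eq_comm (a := j)]
    tauto

theorem contReduces_relPow_fsJump (hT : IsTagging E T) :
    ContReduces (RelPow (FSJump E)) (FSJump E) := by
  refine ⟨fun p m => T m.unpair.1 (p m.unpair.1 m.unpair.2), ?_, fun p q => ?_⟩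
  · exact continuous_pi fun m => (hT.continuous _).comp (by fun_prop)
  · have hcover : ∀ p q : ℕ → ℕ → X,
        (∀ m, ∃ l, E (T (Nat.unpair m).1 (p m.unpair.1 m.unpair.2))
          (T (Nat.unpair l).1 (q l.unpair.1 l.unpair.2))) ↔ ∀ i k, ∃ l, E (p i k) (q i l) := by
      intro p q
      constructor
      · intro h i k
        obtain ⟨l, hl⟩ := h (Nat.pair i k)
        simp only [Nat.unpair_pair, hT.rel_iff] at hl
        exact ⟨l.unpair.2, hl.1 ▸ hl.2⟩
      · intro h m
        obtain ⟨l, hl⟩ := h m.unpair.1 m.unpair.2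
        exact ⟨Nat.pair m.unpair.1 l, by simpa only [Nat.unpair_pair, hT.rel_iff, true_and]⟩
    simp only [RelPow, FSJump, hcover, forall_and]

end IsTagging

theorem isTagging_pair : IsTagging (· = · : ℕ → ℕ → Prop) fun i x => Nat.pair x i where
  continuous _ := continuous_of_discreteTopology
  rel_iff i j x y := by rw [Nat.pair_eq_pair, and_comm]

theorem isTagging_otimes (n : ℕ) : IsTagging (eqNatPlus n) (otimes n) := by
  induction n with
  | zero => exact isTagging_pair.fsJump
  | succ n ih => exact ih.fsJump

theorem contReduces_relPow_eqNatPlus (n : ℕ) :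
    ContReduces (RelPow (eqNatPlus n)) (eqNatPlus n) := by
  cases n with
  | zero => exact isTagging_pair.contReduces_relPow_fsJump
  | succ n => exact (isTagging_otimes n).contReduces_relPow_fsJump

theorem contReduces_fullRel_eqNatPlus (n : ℕ) :
    ContReduces (FullRel (2 * n)) (eqNatPlus n) := by
  induction n with
  | zero => exact ContReduces.refl _
  | succ n ih => exact (ih.relPow.trans (contReduces_relPow_eqNatPlus n)).fsJump

/-! ### Coding sets by canonical elements -/

/-- Membership in `U` is coded by two points `a` and `b`: a continuous map sends `U` into the
`E`-class of `a` and the complement of `U` into the `E`-class of `b`. -/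
def CodedBy {X Y : Type*} [TopologicalSpace X] [TopologicalSpace Y] (E : Y → Y → Prop) (a b : Y)
    (U : Set X) : Prop :=
  ∃ g : X → Y, Continuous g ∧ (∀ x ∈ U, E (g x) a) ∧ ∀ x ∉ U, E (g x) b

/-- The pattern of `canI (m + 2)`, with arbitrary points `F` and `I` in place of `canF m` and
`canI m`: row `i` consists of `i` copies of `F` followed by copies of `I`. -/
def initialPattern {Y : Type*} (F I : Y) (i k : ℕ) : Y :=
  if k < i then F else I

/-- The pattern of `canF (m + 2)`: the rows of `initialPattern F I`, preceded by a row which is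
constantly `F`. -/
def fullPattern {Y : Type*} (F I : Y) (i k : ℕ) : Y :=
  if i = 0 then F else if k + 1 < i then F else I

section Patterns

variable {Y : Type*} {E : Y → Y → Prop} {F I : Y}

theorem fullPattern_zero (F I : Y) : fullPattern F I 0 = fun _ => F := rfl

theorem fullPattern_succ (F I : Y) (i : ℕ) : fullPattern F I (i + 1) = initialPattern F I i := by
  funext k
  simp [fullPattern, initialPattern]

theorem fullRel_one : FullRel 1 = FSJump (RelPow (· = · : ℕ → ℕ → Prop)) := by
  have heq : RelPow (· = · : ℕ → ℕ → Prop) = (· = ·) := by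
    ext p q
    exact funext_iff.symm
  rw [heq]
  rfl

theorem not_fsJump_fullPattern_initialPattern (hFI : ¬ E F I) :
    ¬ FSJump (RelPow E) (fullPattern F I) (initialPattern F I) := by
  rintro ⟨h, -⟩
  obtain ⟨l, hl⟩ := h 0
  have hFI' := hl l
  simp only [fullPattern_zero, initialPattern, lt_irrefl, if_false] at hFI'
  exact hFI hFI'

end Patterns

theorem fullRel_equivalence : ∀ m, Equivalence (FullRel m)
  | 0 => FSJump.equivalence eq_equivalence
  | 1 => FSJump.equivalence eq_equivalence
  | m + 2 => FSJump.equivalence (RelPow.equivalence (fullRel_equivalence m))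

theorem not_fullRel_canF_canI : ∀ m, ¬ FullRel m (canF m) (canI m)
  | 0 => fun h => (h.1 0).elim fun _ => zero_ne_one
  | 1 => fullRel_one ▸ not_fsJump_fullPattern_initialPattern zero_ne_one
  | m + 2 => not_fsJump_fullPattern_initialPattern (not_fullRel_canF_canI m)

namespace CodedBy

variable {X Y : Type*} [TopologicalSpace X] [TopologicalSpace Y] {E : Y → Y → Prop}

theorem contReduces {a b : Y} {U : Set X} (hE : Equivalence E) (hab : ¬ E a b)
    (hU : CodedBy E a b U) : ContReduces (fun x y => x ∈ U ↔ y ∈ U) E := by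
  obtain ⟨g, hg, hgU, hgU'⟩ := hU
  refine ⟨g, hg, fun x y => ?_⟩
  by_cases hx : x ∈ U <;> by_cases hy : y ∈ U <;>
    simp only [hx, hy, iff_true, iff_false, true_iff, not_true_eq_false, false_iff]
  · exact hE.trans (hgU x hx) (hE.symm (hgU y hy))
  · exact fun h => hab (hE.trans (hE.symm (hgU x hx)) (hE.trans h (hgU' y hy)))
  · exact fun h => hab (hE.trans (hE.symm (hgU y hy)) (hE.trans (hE.symm h) (hgU' x hx)))
  · exact hE.trans (hgU' x hx) (hE.symm (hgU' y hy))

theorem of_isClopen (hE : Equivalence E) {U : Set X} (hU : IsClopen U) (a b : Y) :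
    CodedBy E a b U := by
  classical
  refine ⟨fun x => if x ∈ U then a else b, ?_, fun x hx => ?_, fun x hx => ?_⟩
  · exact continuous_const.if (by simp [hU.frontier_eq]) continuous_const
  · simpa only [if_pos hx] using hE.refl a
  · simpa only [if_neg hx] using hE.refl b

/-- The code of the union lists all the points `q (i + 1)` and, for each `k`, the value of the map
for `S k`, which adds the class of `q 0` precisely on `S k`. -/
theorem fsJump_iUnion (hE : Equivalence E) {q : ℕ → Y} {S : ℕ → Set X}
    (hS : ∀ k, ∃ g : X → Y, Continuous g ∧ (∀ x ∈ S k, E (g x) (q 0)) ∧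
      ∀ x ∉ S k, ∃ i, E (g x) (q (i + 1))) :
    CodedBy (FSJump E) q (fun i => q (i + 1)) (⋃ k, S k) := by
  choose g hg hgS hgS' using hS
  let e := Equiv.natSumNatEquivNat
  let value : X → ℕ ⊕ ℕ → Y := fun x => Sum.elim (g · x) fun i => q (i + 1)
  let code : X → ℕ → Y := fun x m => value x (e.symm m)
  have hcode : ∀ x c, (∃ m, E (code x m) c) ↔ (∃ k, E (g k x) c) ∨ ∃ i, E (q (i + 1)) c :=
    fun x c => (e.symm.surjective.exists (p := fun s => E (value x s) c)).symm.trans Sum.exists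
  have habsorb : ∀ k, ∀ x ∉ S k, ∀ c, E (g k x) c → ∃ i, E (q (i + 1)) c := fun k x hx c hc =>
    (hgS' k x hx).imp fun _ hi => hE.trans (hE.symm hi) hc
  refine ⟨code, continuous_pi fun m => ?_, fun x hx => ?_, fun x hx => ?_⟩
  · change Continuous fun x => value x (e.symm m)
    rcases e.symm m with k | i
    · exact hg k
    · exact continuous_const
  · refine (fsJump_iff_forall_exists_iff hE).2 fun c => ?_
    rw [hcode, ← Nat.or_exists_add_one (p := fun i => E (q i) c)]
    constructor
    · rintro (⟨k, hk⟩ | hc)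
      · by_cases hxk : x ∈ S k
        · exact Or.inl (hE.trans (hE.symm (hgS k x hxk)) hk)
        · exact Or.inr (habsorb k x hxk c hk)
      · exact Or.inr hc
    · rintro (hc | hc)
      · obtain ⟨k, hk⟩ := mem_iUnion.1 hx
        exact Or.inl ⟨k, hE.trans (hgS k x hk) hc⟩
      · exact Or.inr hc
  · refine (fsJump_iff_forall_exists_iff hE).2 fun c => ?_
    rw [hcode, or_iff_right_of_imp]
    rintro ⟨k, hk⟩
    exact habsorb k x (fun h => hx (mem_iUnion_of_mem k h)) c hk

theorem exists_forall_relPow {F I : Y} {V : ℕ → Set X}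
    (hV : ∀ j, CodedBy E F I (⋂ i ∈ Iic j, V i)) :
    ∃ g : X → ℕ → Y, Continuous g ∧ (∀ x ∈ ⋂ i, V i, RelPow E (g x) (fullPattern F I 0)) ∧
      ∀ x ∉ ⋂ i, V i, ∃ l, RelPow E (g x) (fullPattern F I (l + 1)) := by
  classical
  choose g hg hgV hgV' using hV
  refine ⟨fun x j => g j x, continuous_pi hg, fun x hx j => hgV j x ?_, fun x hx => ?_⟩
  · exact mem_iInter₂.2 fun i _ => mem_iInter.1 hx i
  · rw [mem_iInter, not_forall] at hx
    refine ⟨Nat.find hx, fun j => ?_⟩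
    rw [fullPattern_succ, initialPattern]
    split_ifs with hj
    · exact hgV j x (mem_iInter₂.2 fun i hi =>
        not_not.1 (Nat.find_min hx (lt_of_le_of_lt (mem_Iic.1 hi) hj)))
    · exact hgV' j x fun h => Nat.find_spec hx (mem_iInter₂.1 h _ (not_lt.1 hj))

theorem fullPattern_iUnion_iInter (hE : Equivalence E) {F I : Y} {V : ℕ → ℕ → Set X}
    (hV : ∀ k j, CodedBy E F I (⋂ i ∈ Iic j, V k i)) :
    CodedBy (FSJump (RelPow E)) (fullPattern F I) (initialPattern F I)
      (⋃ k, ⋂ i, V k i) := by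
  simpa only [fullPattern_succ] using
    fsJump_iUnion (RelPow.equivalence hE) fun k => exists_forall_relPow (hV k)

end CodedBy

theorem exists_isClopen_iUnion_eq {X : Type*} [TopologicalSpace X] [SecondCountableTopology X]
    [HasSmallInductiveDimensionLE X 0] {U : Set X} (hU : IsOpen U) :
    ∃ S : ℕ → Set X, (∀ k, IsClopen (S k)) ∧ U = ⋃ k, S k := by
  have hbasis : IsTopologicalBasis {s : Set X | IsClopen s} :=
    hasSmallInductiveDimensionLT_one_iff.1 ‹_›
  obtain ⟨s, hs, hcount, rfl⟩ := hbasis.exists_countable_biUnion_of_isOpen hU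
  obtain ⟨f, hf⟩ := (hcount.insert ∅).exists_eq_range (insert_nonempty _ _)
  refine ⟨f, fun k => ?_, ?_⟩
  · rcases hf ▸ mem_range_self k with h | h
    · exact h ▸ isClopen_empty
    · exact hs h
  · rw [← sUnion_range f, ← hf, sUnion_insert, empty_union, sUnion_eq_biUnion]

theorem codedBy_canF_canI {X : Type*} [TopologicalSpace X] [SecondCountableTopology X]
    [HasSmallInductiveDimensionLE X 0] : ∀ {m : ℕ} {U : Set X}, U ∈ SigmaLevel X m →
      CodedBy (FullRel m) (canF m) (canI m) U
  | 0, U, hU => by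
    obtain ⟨S, hS, rfl⟩ := exists_isClopen_iUnion_eq hU
    refine CodedBy.fsJump_iUnion (q := canF 0) eq_equivalence fun k => ?_
    obtain ⟨g, hg, hgS, hgS'⟩ := CodedBy.of_isClopen eq_equivalence (hS k) 0 1
    exact ⟨g, hg, hgS, fun x hx => ⟨0, hgS' x hx⟩⟩
  | 1, U, hU => by
    obtain ⟨V, hV, rfl⟩ := hU
    choose S hS hVS using fun k => exists_isClopen_iUnion_eq (hV k)
    simp only [hVS, compl_iUnion]
    rw [fullRel_one]
    exact CodedBy.fullPattern_iUnion_iInter eq_equivalence fun k j =>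
      CodedBy.of_isClopen eq_equivalence
        ((finite_Iic j).isClopen_biInter fun i _ => (hS k i).compl) 0 1
  | m + 2, U, hU => by
    obtain ⟨A, hA, rfl⟩ := hU
    choose B hB hAB using hA
    simp only [hAB, compl_iUnion, compl_compl]
    exact CodedBy.fullPattern_iUnion_iInter (fullRel_equivalence m) fun k j =>
      codedBy_canF_canI (SigmaLevel.biInter_mem (finite_Iic j) fun i _ => hB k i)

theorem contReduces_mem_iff_fullRel {X : Type*} [TopologicalSpace X] [SecondCountableTopology X]
    [HasSmallInductiveDimensionLE X 0] {m : ℕ} {U : Set X} (hU : U ∈ SigmaLevel X m) :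
    ContReduces (fun x y => x ∈ U ↔ y ∈ U) (FullRel m) :=
  (codedBy_canF_canI hU).contReduces (fullRel_equivalence m) (not_fullRel_canF_canI m)

theorem contReduces_forall_mem_iff_eqNatPlus {X I : Type*} [TopologicalSpace X]
    [SecondCountableTopology X] [HasSmallInductiveDimensionLE X 0] [Countable I] {n : ℕ}
    {U : I → Set X} (hU : ∀ i, U i ∈ SigmaLevel X (2 * n)) :
    ContReduces (fun x y => ∀ i, x ∈ U i ↔ y ∈ U i) (eqNatPlus n) := by
  cases isEmpty_or_nonempty I
  · refine ⟨fun _ => canF n, continuous_const, fun x y => ?_⟩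
    simpa using (eqNatPlus_equivalence n).refl _
  · obtain ⟨f, hf⟩ := exists_surjective_nat I
    simp only [hf.forall]
    exact (ContReduces.forall_relPow fun k => (contReduces_mem_iff_fullRel (hU (f k))).trans
      (contReduces_fullRel_eqNatPlus n)).trans (contReduces_relPow_eqNatPlus n)

/-! ### Learning the orbits of a group action -/

/-- The orbits of the points of `K` under `G` are learnable with respect to `E`: on the union of
these orbits, the orbit equivalence relation reduces continuously to `E`. -/
def OrbitLearnable (G : Type*) {X Y : Type*} [Group G] [TopologicalSpace X] [MulAction G X]
    [TopologicalSpace Y] (E : Y → Y → Prop) (K : Set X) : Prop :=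
  ContReduces (fun x y : {x | ∃ a ∈ K, x ∈ MulAction.orbit G a} => x.1 ∈ MulAction.orbit G y.1) E

section Orbits

variable {G X : Type*} [Group G] [TopologicalSpace X] [MulAction G X]

theorem OrbitLearnable.mono {Y : Type*} [TopologicalSpace Y] {E : Y → Y → Prop} {K L : Set X}
    (hK : OrbitLearnable G E K) (hLK : L ⊆ K) : OrbitLearnable G E L := by
  obtain ⟨f, hf, hKE⟩ := hK
  have hsub : {x | ∃ a ∈ L, x ∈ MulAction.orbit G a} ⊆ {x | ∃ a ∈ K, x ∈ MulAction.orbit G a} :=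
    fun _ ⟨a, ha, hx⟩ => ⟨a, hLK ha, hx⟩
  exact ⟨f ∘ inclusion hsub, hf.comp (continuous_inclusion hsub), fun x y =>
    hKE (inclusion hsub x) (inclusion hsub y)⟩

theorem OrbitLearnable.of_invariant_separating [SecondCountableTopology X]
    [HasSmallInductiveDimensionLE X 0] {n : ℕ} {I : Type*} [Countable I] {K : Set X} {U : I → Set X}
    (hU : ∀ i, U i ∈ SigmaLevel X (2 * n)) (hinv : ∀ i (g : G) x, g • x ∈ U i ↔ x ∈ U i)
    (hsep : ∀ a ∈ K, ∀ b ∈ K, (∀ i, a ∈ U i ↔ b ∈ U i) → a ∈ MulAction.orbit G b) :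
    OrbitLearnable G (eqNatPlus n) K := by
  obtain ⟨f, hf, hfU⟩ := contReduces_forall_mem_iff_eqNatPlus hU
  have horbit : ∀ {x y : X}, x ∈ MulAction.orbit G y → ∀ i, x ∈ U i ↔ y ∈ U i := by
    rintro _ y ⟨g, rfl⟩ i
    exact hinv i g y
  refine ⟨fun x => f x, by fun_prop, fun ⟨x, a, ha, hxa⟩ ⟨y, b, hb, hyb⟩ => ?_⟩
  rw [← hfU]
  refine ⟨horbit, fun hxy => ?_⟩
  have hab : a ∈ MulAction.orbit G b := hsep a ha b hb fun i =>
    (horbit hxa i).symm.trans ((hxy i).trans (horbit hyb i))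
  rw [← MulAction.orbit_eq_iff] at hxa hyb hab
  exact MulAction.orbit_eq_iff.1 (hxa.trans (hab.trans hyb.symm))

variable [TopologicalSpace G] [ContinuousMul G] [BaireSpace G] [SecondCountableTopology G]
  [ContinuousSMul G X]

theorem OrbitLearnable.exists_invariant_separating {n : ℕ} {a b : X} (hab : a ∉ MulAction.orbit G b)
    (hlearn : OrbitLearnable G (eqNatPlus n) {a, b}) :
    ∃ U ∈ SigmaLevel X (2 * n), (∀ (g : G) x, g • x ∈ U ↔ x ∈ U) ∧ ¬ (a ∈ U ↔ b ∈ U) := by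
  obtain ⟨f, hf, hE⟩ := hlearn
  let D : Set X := {x | ∃ c ∈ ({a, b} : Set X), x ∈ MulAction.orbit G c}
  let a' : D := ⟨a, a, mem_insert _ _, MulAction.mem_orbit_self a⟩
  let b' : D := ⟨b, b, mem_insert_of_mem _ rfl, MulAction.mem_orbit_self b⟩
  obtain ⟨W, hW, hWinv, hWab⟩ := exists_separating_of_not_eqNatPlus ((hE a' b').not.1 hab)
  have hD : ∀ (g : G), ∀ x ∈ D, g • x ∈ D :=
    fun g _ ⟨c, hc, hx⟩ => ⟨c, hc, MulAction.mem_orbit_of_mem_orbit g hx⟩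
  obtain ⟨U, hU, hUinv, hUW⟩ := SigmaLevel.exists_invariant_extension hD
    (SigmaLevel.preimage_mem hf hW) fun x y hxy => hWinv _ _ ((hE x y).1 hxy)
  have hUW' : ∀ x : D, x.1 ∈ U ↔ f x ∈ W := fun x => Set.ext_iff.1 hUW x
  exact ⟨U, hU, hUinv, (not_congr (iff_congr (hUW' a') (hUW' b'))).2 hWab⟩

theorem stmt_15_general [SecondCountableTopology X] [HasSmallInductiveDimensionLE X 0] (n : ℕ)
    {K : Set X} (hK : K.Countable) :
    OrbitLearnable G (eqNatPlus n) K ↔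
      ∀ a ∈ K, ∀ b ∈ K, a ≠ b → OrbitLearnable G (eqNatPlus n) {a, b} := by
  refine ⟨fun h a ha b hb _ => h.mono (pair_subset ha hb), fun h => ?_⟩
  have hsep : ∀ p : K × K, ∃ U ∈ SigmaLevel X (2 * n), (∀ (g : G) x, g • x ∈ U ↔ x ∈ U) ∧
      ((p.1.1 ∈ U ↔ p.2.1 ∈ U) → p.1.1 ∈ MulAction.orbit G p.2.1) := by
    rintro ⟨⟨a, ha⟩, ⟨b, hb⟩⟩
    by_cases hab : a ∈ MulAction.orbit G b
    · exact ⟨∅, (SigmaLevel.empty_mem_and_univ_mem _).1, fun _ _ => Iff.rfl, fun _ => hab⟩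
    · have hne : a ≠ b := fun h => hab (h ▸ MulAction.mem_orbit_self a)
      obtain ⟨U, hU, hinv, hsep⟩ := (h a ha b hb hne).exists_invariant_separating hab
      exact ⟨U, hU, hinv, fun h => absurd h hsep⟩
  choose U hU hinv hsep using hsep
  have := hK.to_subtype
  exact OrbitLearnable.of_invariant_separating hU hinv fun a ha b hb hab =>
    hsep (⟨a, ha⟩, ⟨b, hb⟩) (hab _)

end Orbits

/-! ### The group of permutations acting on structures -/

theorem continuous_apply_of_discreteTopology {α β Z : Type*} [TopologicalSpace α]
    [DiscreteTopology α] [TopologicalSpace β] [TopologicalSpace Z] {f : Z → α → β} {g : Z → α}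
    (hf : Continuous f) (hg : Continuous g) : Continuous fun z => f z (g z) :=
  (continuous_prod_of_discrete_right (f := fun q : (α → β) × α => q.1 q.2).2
    continuous_apply).comp (hf.prodMk hg)

section Perm

variable {α : Type*} [TopologicalSpace α]

/-- The topology of pointwise convergence of a permutation and of its inverse. -/
instance permTopologicalSpace : TopologicalSpace (Equiv.Perm α) :=
  .induced (fun σ => ((⇑σ : α → α), (⇑σ.symm : α → α))) inferInstance

theorem isInducing_perm_coe_symm :
    Topology.IsInducing fun σ : Equiv.Perm α => ((⇑σ : α → α), (⇑σ.symm : α → α)) :=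
  ⟨rfl⟩

theorem continuous_perm_coe : Continuous fun σ : Equiv.Perm α => (⇑σ : α → α) :=
  isInducing_perm_coe_symm.continuous.fst

theorem continuous_perm_symm_coe : Continuous fun σ : Equiv.Perm α => (⇑σ.symm : α → α) :=
  isInducing_perm_coe_symm.continuous.snd

variable [DiscreteTopology α]

theorem isClosedEmbedding_perm_coe_symm :
    Topology.IsClosedEmbedding fun σ : Equiv.Perm α => ((⇑σ : α → α), (⇑σ.symm : α → α)) := by
  refine ⟨⟨isInducing_perm_coe_symm, fun σ τ h => ?_⟩, ?_⟩
  · exact Equiv.coe_fn_injective (congrArg Prod.fst h)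
  · have hrange : range (fun σ : Equiv.Perm α => ((⇑σ : α → α), (⇑σ.symm : α → α))) =
        ⋂ a, {p : (α → α) × (α → α) | p.2 (p.1 a) = a} ∩ {p | p.1 (p.2 a) = a} := by
      ext p
      simp only [mem_range, mem_iInter, mem_inter_iff, mem_ofPred_eq, forall_and]
      constructor
      · rintro ⟨σ, rfl⟩
        exact ⟨σ.symm_apply_apply, σ.apply_symm_apply⟩
      · rintro ⟨hleft, hright⟩
        exact ⟨⟨p.1, p.2, hleft, hright⟩, rfl⟩
    rw [hrange]
    refine isClosed_iInter fun a => .inter (isClosed_eq ?_ continuous_const)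
      (isClosed_eq ?_ continuous_const)
    · exact continuous_apply_of_discreteTopology continuous_snd (by fun_prop)
    · exact continuous_apply_of_discreteTopology continuous_fst (by fun_prop)

instance permPolishSpace [Countable α] : PolishSpace (Equiv.Perm α) :=
  have : PolishSpace (α → α) := .mk
  isClosedEmbedding_perm_coe_symm.polishSpace

instance permContinuousMul : ContinuousMul (Equiv.Perm α) where
  continuous_mul := by
    refine isInducing_perm_coe_symm.continuous_iff.2 (.prodMk ?_ ?_) <;>
      refine continuous_pi fun a => ?_
    · change Continuous fun p : Equiv.Perm α × Equiv.Perm α => p.1 (p.2 a)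
      exact continuous_apply_of_discreteTopology (continuous_perm_coe.comp continuous_fst)
        ((continuous_apply a).comp (continuous_perm_coe.comp continuous_snd))
    · change Continuous fun p : Equiv.Perm α × Equiv.Perm α => p.2.symm (p.1.symm a)
      exact continuous_apply_of_discreteTopology (continuous_perm_symm_coe.comp continuous_snd)
        ((continuous_apply a).comp (continuous_perm_symm_coe.comp continuous_fst))

end Perm

section Structures

variable {ι : Type} {ar : ι → ℕ}

/-- The logic action: `g • S` is the structure obtained by transporting `S` along `g`. -/
instance : MulAction (Equiv.Perm ℕ) (Md ι ar) where
  smul g S i v := S i (g.symm ∘ v)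
  one_smul _ := rfl
  mul_smul _ _ _ := rfl

theorem iso_iff_mem_orbit {A B : Md ι ar} : Iso A B ↔ A ∈ MulAction.orbit (Equiv.Perm ℕ) B := by
  constructor
  · rintro ⟨σ, hσ, hAB⟩
    exact ⟨(Equiv.ofBijective σ hσ).symm, funext₂ fun i v => (hAB i v).symm⟩
  · rintro ⟨g, rfl⟩
    exact ⟨g.symm, g.symm.bijective, fun _ _ => rfl⟩

theorem learnable_iff_orbitLearnable {X : Type*} [TopologicalSpace X] {E : X → X → Prop}
    {K : Set (Md ι ar)} : Learnable E K ↔ OrbitLearnable (Equiv.Perm ℕ) E K := by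
  have hIso : (Iso : Md ι ar → Md ι ar → Prop) =
      fun A B => A ∈ MulAction.orbit (Equiv.Perm ℕ) B :=
    funext₂ fun _ _ => propext iso_iff_mem_orbit
  unfold Learnable LearnDom OrbitLearnable ContReduces
  rw [hIso]

instance [Countable ι] : SecondCountableTopology (Md ι ar) :=
  inferInstanceAs (SecondCountableTopology (∀ i : ι, (Fin (ar i) → ℕ) → Bool))

instance : HasSmallInductiveDimensionLE (Md ι ar) 0 := by
  have : CompactSpace (Md ι ar) :=
    inferInstanceAs (CompactSpace (∀ i : ι, (Fin (ar i) → ℕ) → Bool))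
  have : T2Space (Md ι ar) := inferInstanceAs (T2Space (∀ i : ι, (Fin (ar i) → ℕ) → Bool))
  have : TotallyDisconnectedSpace (Md ι ar) :=
    inferInstanceAs (TotallyDisconnectedSpace (∀ i : ι, (Fin (ar i) → ℕ) → Bool))
  exact hasSmallInductiveDimensionLT_one_iff.2 isTopologicalBasis_isClopen

instance : ContinuousSMul (Equiv.Perm ℕ) (Md ι ar) where
  continuous_smul := by
    refine continuous_pi fun i => continuous_pi fun v => ?_
    change Continuous fun p : Equiv.Perm ℕ × Md ι ar => p.2 i (p.1.symm ∘ v)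
    refine continuous_apply_of_discreteTopology ((continuous_apply i).comp continuous_snd)
      (continuous_pi fun j => ?_)
    exact (continuous_apply (v j)).comp (continuous_perm_symm_coe.comp continuous_fst)

end Structures

/-- for every `n ≥ 1` (via the shift `eqNatPlus n = =_ℕ^{(n+1)+}`),
`=_ℕ^{(n+1)+}` is compact for learning: a countable family of pairwise nonisomorphic
structures is learnable iff each of its two-element subfamilies is. -/
theorem stmt_15 {ι : Type} [Countable ι] (ar : ι → ℕ) (har : ∃ i, 2 ≤ ar i) (n : ℕ)
    (K : Set (Md ι ar)) (hK : GoodFamily K) :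
    Learnable (eqNatPlus n) K ↔
      ∀ A ∈ K, ∀ B ∈ K, A ≠ B → Learnable (eqNatPlus n) ({A, B} : Set (Md ι ar)) := by
  simpa only [learnable_iff_orbitLearnable] using stmt_15_general n hK.1
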